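/- There exists an absolute constant C₁ > 0 such that for every 1 < p < ∞, every n ∈ ℕ, and every f : C_n → ℝ, one has −E(Δf · |f|^{p−1} sgn(f)) ≥ C₁ · c_p · E|f|^p − 2^{p/2} · c_p · |E f|^p, where c_p = 2·min(1/p, 1/p′) and p′ = p/(p−1). -/

import Mathlib

open Finset MeasureTheory Real

noncomputable section

/-- Expectation on the Hamming cube `{-1,1}^n`, modeled as `Fin n → Bool`
(`true ↔ 1`, `false ↔ -1`), with the uniform probability measure. -/
def cubeE {n : ℕ} (f : (Fin n → Bool) → ℝ) : ℝ :=
  (∑ x : Fin n → Bool, f x) / 2 ^ n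

/-- The Walsh monomial `x^S = ∏_{i ∈ S} x_i`. -/
def walsh {n : ℕ} (S : Finset (Fin n)) (x : Fin n → Bool) : ℝ :=
  ∏ i ∈ S, (if x i then (1 : ℝ) else -1)

/-- Fourier coefficient `f̂(S) = E (f · x^S)`. -/
def cubeFourier {n : ℕ} (f : (Fin n → Bool) → ℝ) (S : Finset (Fin n)) : ℝ :=
  cubeE fun x => f x * walsh S x

/-- The heat semigroup `e^{tΔ} f = Σ_S e^{-t|S|} f̂(S) x^S`. -/
def heat1 {n : ℕ} (t : ℝ) (f : (Fin n → Bool) → ℝ) : (Fin n → Bool) → ℝ :=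
  fun x => ∑ S : Finset (Fin n), Real.exp (-t * (S.card : ℝ)) * cubeFourier f S * walsh S x

/-- The fractional heat semigroup `e^{tΔ_γ} f = Σ_S e^{-t|S|^γ} f̂(S) x^S`. -/
def heatFrac {n : ℕ} (γ t : ℝ) (f : (Fin n → Bool) → ℝ) : (Fin n → Bool) → ℝ :=
  fun x => ∑ S : Finset (Fin n), Real.exp (-t * (S.card : ℝ) ^ γ) * cubeFourier f S * walsh S x

/-- The Laplacian `Δf = -Σ_S |S| f̂(S) x^S`. -/
def lap {n : ℕ} (f : (Fin n → Bool) → ℝ) : (Fin n → Bool) → ℝ :=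
  fun x => -∑ S : Finset (Fin n), (S.card : ℝ) * cubeFourier f S * walsh S x

/-- The fractional Laplacian `Δ_γ f = -Σ_S |S|^γ f̂(S) x^S`. -/
def fracLap {n : ℕ} (γ : ℝ) (f : (Fin n → Bool) → ℝ) : (Fin n → Bool) → ℝ :=
  fun x => -∑ S : Finset (Fin n), (S.card : ℝ) ^ γ * cubeFourier f S * walsh S x

/-- The discrete partial derivative `∇_j f`. -/
def cubeGrad {n : ℕ} (j : Fin n) (f : (Fin n → Bool) → ℝ) (x : Fin n → Bool) : ℝ :=
  (f (Function.update x j true) - f (Function.update x j false)) / 2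

/-- The squared length of the discrete gradient, `|∇f|²(x) = Σ_j |∇_j f(x)|²`. -/
def gradSq {n : ℕ} (f : (Fin n → Bool) → ℝ) (x : Fin n → Bool) : ℝ :=
  ∑ j : Fin n, (cubeGrad j f x) ^ 2

/-- The `L^p` norm `‖f‖_p = (E|f|^p)^{1/p}` on the Hamming cube. -/
def pNorm {n : ℕ} (p : ℝ) (f : (Fin n → Bool) → ℝ) : ℝ :=
  (cubeE fun x => |f x| ^ p) ^ (1 / p)

/-!
Put `g = |f| ^ (p / 2) * sgn f`, so that `E g² = E |f| ^ p`. Weighted AM-GM gives, for each pair of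
neighbours in the cube, the Stroock–Varopoulos inequality
`c_p (g x - g y)² ≤ (f x - f y) (|f x| ^ (p - 1) sgn (f x) - |f y| ^ (p - 1) sgn (f y))`; summing it
over edges and applying the Poincaré inequality to `g` bounds `-E (Δf · |f| ^ (p - 1) sgn f)` below
by `c_p Var g`. If `Var g` is at least a fixed fraction of `E g²`, this suffices. Otherwise `g`
concentrates around its mean `m`: since `1 - (x - 2)² ≤ |x| ^ r sgn x` for `0 ≤ r ≤ 2`, taking
`x = 2 g / m` and `r = 2 / p` and averaging bounds `|E f| ^ p` below by a multiple of
`2 ^ (-p / 2) m²`, and `m²` is comparable to `E g²`.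
-/

section SignedPower

/-- The odd power function `|x| ^ r * sgn x`. Composing with it moves between `f ∈ Lᵖ` and
`|f| ^ (p / 2) * sgn f ∈ L²`. -/
def signedRpow (r x : ℝ) : ℝ := |x| ^ r * Real.sign x

variable {r q x : ℝ}

lemma real_sign_mul (x y : ℝ) : Real.sign (x * y) = Real.sign x * Real.sign y := by
  rcases lt_trichotomy x 0 with hx | rfl | hx <;> rcases lt_trichotomy y 0 with hy | rfl | hy <;>
    simp [*, Real.sign_of_neg, Real.sign_of_pos, mul_pos_of_neg_of_neg, mul_neg_of_neg_of_pos,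
      mul_neg_of_pos_of_neg]

lemma signedRpow_of_pos (hx : 0 < x) : signedRpow r x = x ^ r := by
  simp [signedRpow, abs_of_pos hx, Real.sign_of_pos hx]

lemma signedRpow_zero (r : ℝ) : signedRpow r 0 = 0 := by
  simp [signedRpow]

lemma signedRpow_neg (r x : ℝ) : signedRpow r (-x) = -signedRpow r x := by
  simp [signedRpow, Real.sign_neg]

lemma signedRpow_mul (r x y : ℝ) : signedRpow r (x * y) = signedRpow r x * signedRpow r y := by
  simp only [signedRpow, real_sign_mul, abs_mul, Real.mul_rpow (abs_nonneg x) (abs_nonneg y)]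
  ring

lemma signedRpow_one (x : ℝ) : signedRpow 1 x = x := by
  rcases lt_trichotomy x 0 with hx | rfl | hx
  · simp [signedRpow, abs_of_neg hx, Real.sign_of_neg hx]
  · exact signedRpow_zero 1
  · rw [signedRpow_of_pos hx, Real.rpow_one]

lemma abs_signedRpow (r : ℝ) (hx : x ≠ 0) : |signedRpow r x| = |x| ^ r := by
  have hsign : |Real.sign x| = 1 := by
    rcases Real.sign_apply_eq_of_ne_zero x hx with h | h <;> simp [h]
  rw [signedRpow, abs_mul, hsign, mul_one, abs_of_nonneg (by positivity)]

lemma signedRpow_signedRpow (r q x : ℝ) :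
    signedRpow r (signedRpow q x) = signedRpow (q * r) x := by
  have of_pos : ∀ x > 0, signedRpow r (signedRpow q x) = signedRpow (q * r) x := fun x hx => by
    rw [signedRpow_of_pos hx, signedRpow_of_pos hx, signedRpow_of_pos (by positivity),
      Real.rpow_mul hx.le]
  rcases lt_trichotomy x 0 with hx | rfl | hx
  · simpa only [signedRpow_neg, neg_inj] using of_pos (-x) (neg_pos.mpr hx)
  · simp only [signedRpow_zero]
  · exact of_pos x hx

lemma signedRpow_mul_signedRpow (h : r + q ≠ 0) (x : ℝ) :
    signedRpow r x * signedRpow q x = |x| ^ (r + q) := by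
  rcases eq_or_ne x 0 with rfl | hx
  · simp [signedRpow_zero, Real.zero_rpow h]
  · rw [Real.rpow_add (abs_pos.mpr hx)]
    rcases Real.sign_apply_eq_of_ne_zero x hx with hs | hs <;> simp [signedRpow, hs]

lemma measurable_signedRpow (r : ℝ) : Measurable (signedRpow r) := by
  have hsign : Measurable Real.sign :=
    Measurable.ite measurableSet_Iio measurable_const
      (Measurable.ite measurableSet_Ioi measurable_const measurable_const)
  unfold signedRpow
  fun_prop

lemma abs_signedRpow_le_one_add_sq (hr₀ : 0 ≤ r) (hr₂ : r ≤ 2) (x : ℝ) :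
    |signedRpow r x| ≤ 1 + x ^ 2 := by
  rcases eq_or_ne x 0 with rfl | hx
  · simp [signedRpow_zero]
  rw [abs_signedRpow r hx]
  rcases le_total |x| 1 with h | h
  · exact (Real.rpow_le_one (abs_nonneg x) h hr₀).trans (by linarith [sq_nonneg x])
  · calc |x| ^ r ≤ |x| ^ (2 : ℝ) := Real.rpow_le_rpow_of_exponent_le h hr₂
      _ = x ^ 2 := by rw [Real.rpow_two, sq_abs]
      _ ≤ 1 + x ^ 2 := by linarith

end SignedPower

section StroockVaropoulos

variable {s x y : ℝ}

lemma rpow_mul_rpow_two_sub_le (hs₀ : 0 ≤ s) (hs₁ : s ≤ 1) (hx : 0 ≤ x) (hy : 0 ≤ y) :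
    x ^ s * y ^ (2 - s) ≤ s * (x * y) + (1 - s) * y ^ 2 := by
  calc x ^ s * y ^ (2 - s) = (x * y) ^ s * (y ^ 2) ^ (1 - s) := by
        rw [Real.mul_rpow hx hy, ← Real.rpow_natCast_mul hy, mul_assoc,
          ← Real.rpow_add_of_nonneg hy hs₀ (by push_cast; linarith)]
        congr 2
        push_cast
        ring
    _ ≤ s * (x * y) + (1 - s) * y ^ 2 :=
        Real.geom_mean_le_arith_mean2_weighted hs₀ (by linarith) (by positivity) (by positivity)
          (by ring)

lemma two_mul_mul_le_rpow_mul_rpow_two_sub_add (hs₀ : 0 ≤ s) (hs₂ : s ≤ 2)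
    (hx : 0 ≤ x) (hy : 0 ≤ y) :
    2 * (x * y) ≤ x ^ s * y ^ (2 - s) + y ^ s * x ^ (2 - s) := by
  have rpow_mul_rpow : ∀ z : ℝ, 0 ≤ z → z ^ s * z ^ (2 - s) = z ^ 2 := fun z hz => by
    rw [← Real.rpow_add_of_nonneg hz hs₀ (by linarith), add_sub_cancel, Real.rpow_two]
  refine two_mul_le_add_of_sq_le_mul (by positivity) (by positivity) (le_of_eq ?_)
  calc (x * y) ^ 2 = (x ^ s * x ^ (2 - s)) * (y ^ s * y ^ (2 - s)) := by
        rw [rpow_mul_rpow x hx, rpow_mul_rpow y hy, mul_pow]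
    _ = x ^ s * y ^ (2 - s) * (y ^ s * x ^ (2 - s)) := by ring

lemma signedRpow_mul_signedRpow_two_sub_add_le (hs₀ : 0 ≤ s) (hs₁ : s ≤ 1) (x y : ℝ) :
    signedRpow s x * signedRpow (2 - s) y + signedRpow s y * signedRpow (2 - s) x
      ≤ 2 * s * (x * y) + (1 - s) * (x ^ 2 + y ^ 2) := by
  have factor : signedRpow s x * signedRpow (2 - s) y + signedRpow s y * signedRpow (2 - s) x
      = (|x| ^ s * |y| ^ (2 - s) + |y| ^ s * |x| ^ (2 - s)) * Real.sign (x * y) := by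
    simp only [signedRpow, real_sign_mul]
    ring
  have hxy : x * y = |x| * |y| * Real.sign (x * y) := by
    simpa only [signedRpow, Real.rpow_one, abs_mul] using (signedRpow_one (x * y)).symm
  have upper_x := rpow_mul_rpow_two_sub_le hs₀ hs₁ (abs_nonneg x) (abs_nonneg y)
  have upper_y := rpow_mul_rpow_two_sub_le hs₀ hs₁ (abs_nonneg y) (abs_nonneg x)
  have lower := two_mul_mul_le_rpow_mul_rpow_two_sub_add hs₀ (by linarith)
    (abs_nonneg x) (abs_nonneg y)
  rw [factor, ← sq_abs x, ← sq_abs y]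
  rcases Real.sign_apply_eq (x * y) with h | h | h <;> rw [h] at hxy ⊢ <;> rw [hxy]
  · have : s * (|x| * |y|) ≤ |x| * |y| := mul_le_of_le_one_left (by positivity) hs₁
    have : 0 ≤ (1 - s) * (|x| ^ 2 + |y| ^ 2) := mul_nonneg (by linarith) (by positivity)
    linarith
  · have : 0 ≤ (1 - s) * (|x| ^ 2 + |y| ^ 2) := mul_nonneg (by linarith) (by positivity)
    linarith
  · linarith

lemma mul_sub_sq_le_signedRpow_sub_mul_signedRpow_sub (hs₀ : 0 ≤ s) (hs₁ : s ≤ 1) (x y : ℝ) :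
    s * (x - y) ^ 2 ≤ (signedRpow s x - signedRpow s y)
      * (signedRpow (2 - s) x - signedRpow (2 - s) y) := by
  have diag : ∀ z, signedRpow s z * signedRpow (2 - s) z = z ^ 2 := fun z => by
    rw [signedRpow_mul_signedRpow (by norm_num), add_sub_cancel, Real.rpow_two, sq_abs]
  linarith [diag x, diag y, signedRpow_mul_signedRpow_two_sub_add_le hs₀ hs₁ x y]

lemma min_mul_sub_sq_le_signedRpow_sub_mul_signedRpow_sub (hs₀ : 0 ≤ s) (hs₂ : s ≤ 2) (x y : ℝ) :
    min s (2 - s) * (x - y) ^ 2 ≤ (signedRpow s x - signedRpow s y)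
      * (signedRpow (2 - s) x - signedRpow (2 - s) y) := by
  rcases le_total s 1 with h | h
  · rw [min_eq_left (by linarith)]
    exact mul_sub_sq_le_signedRpow_sub_mul_signedRpow_sub hs₀ h x y
  · rw [min_eq_right (by linarith), mul_comm (signedRpow s x - signedRpow s y)]
    simpa only [sub_sub_cancel] using mul_sub_sq_le_signedRpow_sub_mul_signedRpow_sub
      (s := 2 - s) (by linarith) (by linarith) x y

theorem stroock_varopoulos {p : ℝ} (hp : 1 ≤ p) (x y : ℝ) :
    min (2 / p) (2 - 2 / p) * (signedRpow (p / 2) x - signedRpow (p / 2) y) ^ 2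
      ≤ (x - y) * (signedRpow (p - 1) x - signedRpow (p - 1) y) := by
  have : 0 < p := by linarith
  have h := min_mul_sub_sq_le_signedRpow_sub_mul_signedRpow_sub (s := 2 / p) (by positivity)
    (div_le_self zero_le_two hp) (signedRpow (p / 2) x) (signedRpow (p / 2) y)
  have exp_one : p / 2 * (2 / p) = 1 := by field_simp
  have exp_sub_one : p / 2 * (2 - 2 / p) = p - 1 := by field_simp
  simpa only [signedRpow_signedRpow, exp_one, exp_sub_one, signedRpow_one] using h

lemma two_mul_min_one_div_eq {p : ℝ} (hp : p ≠ 0) :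
    2 * min (1 / p) (1 / (p / (p - 1))) = min (2 / p) (2 - 2 / p) := by
  rw [one_div_div, sub_div, div_self hp, mul_min_of_nonneg _ _ zero_le_two]
  congr 1 <;> ring

end StroockVaropoulos

section MeanOfSignedPower

open ProbabilityTheory

variable {Ω : Type*} {mΩ : MeasurableSpace Ω} {μ : Measure Ω} {g : Ω → ℝ} {p r : ℝ}

lemma one_sub_sub_two_sq_le_signedRpow (hr₀ : 0 ≤ r) (hr₂ : r ≤ 2) (x : ℝ) :
    1 - (x - 2) ^ 2 ≤ signedRpow r x := by
  rcases lt_trichotomy x 0 with hx | rfl | hx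
  · linarith [neg_le_of_abs_le (abs_signedRpow_le_one_add_sq hr₀ hr₂ x)]
  · norm_num [signedRpow_zero]
  · rw [signedRpow_of_pos hx]
    rcases le_total 1 x with h | h
    · linarith [Real.one_le_rpow h hr₀, sq_nonneg (x - 2)]
    · have : 1 ≤ (x - 2) ^ 2 := by nlinarith
      linarith [Real.rpow_nonneg hx.le r]

lemma integrable_signedRpow_of_memLp_two [IsFiniteMeasure μ] (hr₀ : 0 ≤ r) (hr₂ : r ≤ 2)
    (hg : MemLp g 2 μ) : Integrable (fun ω => signedRpow r (g ω)) μ := by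
  refine ((integrable_const 1).add hg.integrable_sq).mono'
    ((measurable_signedRpow r).comp_aemeasurable hg.aemeasurable).aestronglyMeasurable ?_
  exact .of_forall fun ω => abs_signedRpow_le_one_add_sq hr₀ hr₂ (g ω)

variable [IsProbabilityMeasure μ]

lemma one_sub_integral_sub_two_sq_le_integral_signedRpow (hr₀ : 0 ≤ r) (hr₂ : r ≤ 2)
    (hg : MemLp g 2 μ) :
    1 - ∫ ω, (g ω - 2) ^ 2 ∂μ ≤ ∫ ω, signedRpow r (g ω) ∂μ := by
  have hsq : Integrable (fun ω => (g ω - 2) ^ 2) μ := (hg.sub (memLp_const 2)).integrable_sq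
  calc 1 - ∫ ω, (g ω - 2) ^ 2 ∂μ = ∫ ω, (1 - (g ω - 2) ^ 2) ∂μ := by
        rw [integral_sub (integrable_const 1) hsq, integral_const, probReal_univ, one_smul]
    _ ≤ ∫ ω, signedRpow r (g ω) ∂μ :=
        integral_mono ((integrable_const 1).sub hsq)
          (integrable_signedRpow_of_memLp_two hr₀ hr₂ hg)
          fun ω => one_sub_sub_two_sq_le_signedRpow hr₀ hr₂ (g ω)

lemma rpow_mul_one_sub_variance_le_abs_integral_signedRpow (hr₀ : 0 ≤ r) (hr₂ : r ≤ 2)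
    (hg : MemLp g 2 μ) (hm : μ[g] ≠ 0) :
    (|μ[g]| / 2) ^ r * (1 - 4 * (Var[g; μ] / μ[g] ^ 2)) ≤ |∫ ω, signedRpow r (g ω) ∂μ| := by
  set m := μ[g]
  have rescale : ∀ ω, signedRpow r (g ω) = signedRpow r (m / 2) * signedRpow r (2 / m * g ω) :=
    fun ω => by
      rw [← signedRpow_mul]
      congr 1
      field_simp
  have hvar : ∫ ω, (2 / m * g ω - 2) ^ 2 ∂μ = 4 * (Var[g; μ] / m ^ 2) := by
    rw [variance_eq_integral hg.aemeasurable, ← integral_div, ← integral_const_mul]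
    refine integral_congr_ae (.of_forall fun ω => ?_)
    field_simp
    ring
  have habs : |m / 2| = |m| / 2 := by rw [abs_div, abs_two]
  simp only [rescale]
  rw [integral_const_mul, abs_mul, abs_signedRpow r (div_ne_zero hm two_ne_zero), habs, ← hvar]
  gcongr
  exact (one_sub_integral_sub_two_sq_le_integral_signedRpow hr₀ hr₂ (hg.const_mul _)).trans
    (le_abs_self _)

lemma sq_integral_le_two_rpow_mul_abs_integral_signedRpow_rpow (hp : 1 ≤ p) (hg : MemLp g 2 μ)
    (hvar : 15 * Var[g; μ] ≤ μ[g] ^ 2) :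
    μ[g] ^ 2 / 4 ≤ (2 : ℝ) ^ (p / 2) * |∫ ω, signedRpow (2 / p) (g ω) ∂μ| ^ p := by
  have hp₀ : 0 < p := by linarith
  rcases eq_or_ne μ[g] 0 with hm | hm
  · rw [hm, zero_pow two_ne_zero, zero_div]
    positivity
  have hratio : 11 / 15 ≤ 1 - 4 * (Var[g; μ] / μ[g] ^ 2) := by
    have : Var[g; μ] / μ[g] ^ 2 ≤ 1 / 15 := by
      rw [div_le_iff₀ (by positivity)]
      linarith
    linarith
  have hmean : (|μ[g]| / 2) ^ (2 / p) * (11 / 15) ≤ |∫ ω, signedRpow (2 / p) (g ω) ∂μ| :=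
    (by gcongr : _ ≤ (|μ[g]| / 2) ^ (2 / p) * (1 - 4 * (Var[g; μ] / μ[g] ^ 2))).trans
      (rpow_mul_one_sub_variance_le_abs_integral_signedRpow (by positivity)
        (div_le_self zero_le_two hp) hg hm)
  -- `11 / 15 = 1 - 4 / 15` is large enough that `2 * (11 / 15) ^ 2 ≥ 1`.
  have hconst : 1 ≤ (2 : ℝ) ^ (p / 2) * (11 / 15) ^ p := by
    have hsq : (11 / 15 : ℝ) ^ p = ((11 / 15) ^ 2) ^ (p / 2) := by
      rw [← Real.rpow_natCast_mul (by norm_num)]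
      congr 1
      push_cast
      ring
    rw [hsq, ← Real.mul_rpow (by norm_num) (by norm_num)]
    exact Real.one_le_rpow (by norm_num) (by positivity)
  calc μ[g] ^ 2 / 4 ≤ (2 : ℝ) ^ (p / 2) * (11 / 15) ^ p * (μ[g] ^ 2 / 4) :=
        le_mul_of_one_le_left (by positivity) hconst
    _ = (2 : ℝ) ^ (p / 2) * ((|μ[g]| / 2) ^ (2 / p) * (11 / 15)) ^ p := by
        rw [Real.mul_rpow (by positivity) (by norm_num), ← Real.rpow_mul (by positivity),
          div_mul_cancel₀ _ hp₀.ne', Real.rpow_two, div_pow, sq_abs]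
        ring
    _ ≤ (2 : ℝ) ^ (p / 2) * |∫ ω, signedRpow (2 / p) (g ω) ∂μ| ^ p := by gcongr

theorem integral_sq_le_variance_add_abs_integral_signedRpow_rpow (hp : 1 ≤ p) (hg : MemLp g 2 μ) :
    1 / 16 * ∫ ω, g ω ^ 2 ∂μ
      ≤ Var[g; μ] + (2 : ℝ) ^ (p / 2) * |∫ ω, signedRpow (2 / p) (g ω) ∂μ| ^ p := by
  have hsq : ∫ ω, g ω ^ 2 ∂μ = Var[g; μ] + μ[g] ^ 2 := by
    rw [variance_eq_sub hg]
    simp only [Pi.pow_apply, sub_add_cancel]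
  have hvar₀ := variance_nonneg g μ
  rcases le_total (15 * Var[g; μ]) (μ[g] ^ 2) with hvar | hvar
  · linarith [sq_integral_le_two_rpow_mul_abs_integral_signedRpow_rpow hp hg hvar,
      sq_nonneg μ[g]]
  · have : 0 ≤ (2 : ℝ) ^ (p / 2) * |∫ ω, signedRpow (2 / p) (g ω) ∂μ| ^ p := by positivity
    linarith

end MeanOfSignedPower

section Cube

open ProbabilityTheory

variable {n : ℕ}

/-- The point obtained from `x` by flipping its `j`-th coordinate. -/
def flipCoord (j : Fin n) (x : Fin n → Bool) : Fin n → Bool :=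
  Function.update x j (!x j)

lemma flipCoord_involutive (j : Fin n) : Function.Involutive (flipCoord j) := fun x => by
  simp [flipCoord]

lemma cubeE_comp_flipCoord (j : Fin n) (f : (Fin n → Bool) → ℝ) :
    cubeE (fun x => f (flipCoord j x)) = cubeE f :=
  congrArg (· / 2 ^ n) (Equiv.sum_comp (flipCoord_involutive j).toPerm f)

lemma walsh_flipCoord (j : Fin n) (S : Finset (Fin n)) (x : Fin n → Bool) :
    walsh S (flipCoord j x) = (if j ∈ S then -1 else 1) * walsh S x := by
  have hfactor : ∀ i, (if flipCoord j x i then (1 : ℝ) else -1)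
      = (if i = j then -1 else 1) * (if x i then 1 else -1) := fun i => by
    rcases eq_or_ne i j with rfl | hij
    · cases hx : x i <;> simp [flipCoord, hx]
    · simp [flipCoord, hij]
  simp only [walsh, hfactor, prod_mul_distrib, prod_ite_eq']

lemma sum_walsh_mul_walsh (x y : Fin n → Bool) :
    ∑ S : Finset (Fin n), walsh S x * walsh S y = if x = y then (2 : ℝ) ^ n else 0 := by
  have hprod : ∑ S : Finset (Fin n), walsh S x * walsh S y
      = ∏ i, (1 + (if x i then (1 : ℝ) else -1) * (if y i then 1 else -1)) := by
    simp only [prod_one_add, walsh, prod_mul_distrib, powerset_univ]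
  have hfactor : ∀ i, 1 + (if x i then (1 : ℝ) else -1) * (if y i then 1 else -1)
      = if x i = y i then 2 else 0 := fun i => by
    cases x i <;> cases y i <;> norm_num
  simp only [hprod, hfactor, prod_ite_zero, mem_univ, prod_const, card_univ,
    Fintype.card_fin, forall_const, funext_iff]

lemma cubeE_eq_integral (f : (Fin n → Bool) → ℝ) :
    cubeE f = ∫ x, f x ∂(uniformOn Set.univ) := by
  simp [cubeE, uniformOn, ProbabilityTheory.cond, div_eq_inv_mul]

lemma sum_cubeFourier_mul_walsh (f : (Fin n → Bool) → ℝ) (x : Fin n → Bool) :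
    ∑ S, cubeFourier f S * walsh S x = f x := by
  calc ∑ S, cubeFourier f S * walsh S x
      = ∑ y, f y / 2 ^ n * ∑ S, walsh S y * walsh S x := by
        simp only [cubeFourier, cubeE, sum_div, sum_mul, mul_sum]
        rw [sum_comm]
        exact sum_congr rfl fun y _ => sum_congr rfl fun S _ => by ring
    _ = f x := by simp [sum_walsh_mul_walsh]

lemma cubeE_sum_walsh_mul (a : Finset (Fin n) → ℝ) (f : (Fin n → Bool) → ℝ) :
    cubeE (fun x => (∑ S, a S * walsh S x) * f x) = ∑ S, a S * cubeFourier f S := by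
  simp only [cubeFourier, cubeE, sum_div, sum_mul, mul_sum]
  rw [sum_comm]
  exact sum_congr rfl fun S _ => sum_congr rfl fun x _ => by ring

lemma cubeE_sq_eq_sum_cubeFourier_sq (f : (Fin n → Bool) → ℝ) :
    cubeE (fun x => f x ^ 2) = ∑ S, cubeFourier f S ^ 2 := by
  simpa only [sum_cubeFourier_mul_walsh, ← sq] using cubeE_sum_walsh_mul (cubeFourier f) f

lemma neg_cubeE_lap_mul_eq_sum_cubeFourier (f h : (Fin n → Bool) → ℝ) :
    -cubeE (fun x => lap f x * h x) = ∑ S, (S.card : ℝ) * cubeFourier f S * cubeFourier h S := by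
  have hlap : ∀ x, lap f x = ∑ S, -((S.card : ℝ) * cubeFourier f S) * walsh S x := fun x => by
    simp only [lap, neg_mul, sum_neg_distrib]
  simp only [hlap, cubeE_sum_walsh_mul]
  simp only [neg_mul, sum_neg_distrib, neg_neg]

theorem variance_le_neg_cubeE_lap_mul_self (f : (Fin n → Bool) → ℝ) :
    Var[f; uniformOn Set.univ] ≤ -cubeE (fun x => lap f x * f x) := by
  have hmean : cubeE f = cubeFourier f ∅ := by simp [cubeFourier, walsh]
  calc Var[f; uniformOn Set.univ] = ∑ S, cubeFourier f S ^ 2 - cubeFourier f ∅ ^ 2 := by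
        rw [variance_eq_sub .of_discrete, ← cubeE_eq_integral, ← cubeE_eq_integral, hmean,
          ← cubeE_sq_eq_sum_cubeFourier_sq]
        rfl
    _ = ∑ S ∈ univ.erase ∅, cubeFourier f S ^ 2 := (sum_erase_eq_sub (mem_univ ∅)).symm
    _ ≤ ∑ S ∈ univ.erase ∅, (S.card : ℝ) * cubeFourier f S ^ 2 := sum_le_sum fun S hS =>
        le_mul_of_one_le_left (sq_nonneg _) <| Nat.one_le_cast.mpr <|
          card_pos.mpr <| nonempty_iff_ne_empty.mpr <| ne_of_mem_erase hS
    _ ≤ ∑ S, (S.card : ℝ) * cubeFourier f S ^ 2 :=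
        sum_le_sum_of_subset_of_nonneg (erase_subset _ _) fun S _ _ => by positivity
    _ = -cubeE (fun x => lap f x * f x) := by
        simp only [neg_cubeE_lap_mul_eq_sum_cubeFourier, sq, mul_assoc]

lemma neg_lap_eq_sum_sub_flipCoord (f : (Fin n → Bool) → ℝ) (x : Fin n → Bool) :
    -lap f x = ∑ j, (f x - f (flipCoord j x)) / 2 := by
  have hdiff : ∀ j, (f x - f (flipCoord j x)) / 2
      = ∑ S, if j ∈ S then cubeFourier f S * walsh S x else 0 := fun j => by
    rw [← sum_cubeFourier_mul_walsh f x, ← sum_cubeFourier_mul_walsh f (flipCoord j x),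
      ← sum_sub_distrib, sum_div]
    refine sum_congr rfl fun S _ => ?_
    rw [walsh_flipCoord]
    split_ifs <;> ring
  simp only [hdiff]
  rw [sum_comm, lap, neg_neg]
  simp only [sum_ite_mem, univ_inter, sum_const, nsmul_eq_mul, mul_assoc]

lemma sub_flipCoord_mul_sub_flipCoord (f h : (Fin n → Bool) → ℝ) (j : Fin n) (x : Fin n → Bool) :
    (f x - f (flipCoord j x)) * (h x - h (flipCoord j x))
      = 4 * (cubeGrad j f x * cubeGrad j h x) := by
  have hself : Function.update x j (x j) = x := Function.update_eq_self j x
  cases hx : x j <;> rw [hx] at hself <;>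
    simp only [cubeGrad, flipCoord, hx, hself, Bool.not_true, Bool.not_false] <;> ring

-- Flipping the `j`-th coordinate preserves `E` and negates `f x - f (flipCoord j x)`, so both sides
-- equal the average of the left side and its flipped copy.
lemma cubeE_sub_flipCoord_mul (f h : (Fin n → Bool) → ℝ) (j : Fin n) :
    cubeE (fun x => (f x - f (flipCoord j x)) / 2 * h x)
      = cubeE (fun x => cubeGrad j f x * cubeGrad j h x) := by
  have hflip : cubeE (fun x => (f (flipCoord j x) - f x) / 2 * h (flipCoord j x))
      = cubeE (fun x => (f x - f (flipCoord j x)) / 2 * h x) := by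
    simpa only [flipCoord_involutive j _] using
      cubeE_comp_flipCoord j (fun x => (f x - f (flipCoord j x)) / 2 * h x)
  have hsum : cubeE (fun x => cubeGrad j f x * cubeGrad j h x)
      = (cubeE (fun x => (f x - f (flipCoord j x)) / 2 * h x)
        + cubeE (fun x => (f (flipCoord j x) - f x) / 2 * h (flipCoord j x))) / 2 := by
    simp only [cubeE, ← add_div, ← sum_add_distrib]
    rw [div_right_comm, sum_div _ _ (2 : ℝ)]
    congr 1
    refine sum_congr rfl fun x _ => ?_
    linarith [sub_flipCoord_mul_sub_flipCoord f h j x]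
  rw [hsum, hflip, add_self_div_two]

lemma neg_cubeE_lap_mul_eq_cubeE_sum_cubeGrad (f h : (Fin n → Bool) → ℝ) :
    -cubeE (fun x => lap f x * h x) = cubeE (fun x => ∑ j, cubeGrad j f x * cubeGrad j h x) := by
  have cubeE_sum : ∀ F : Fin n → (Fin n → Bool) → ℝ,
      cubeE (fun x => ∑ j, F j x) = ∑ j, cubeE (F j) := fun F => by
    simp only [cubeE, sum_div]
    rw [sum_comm]
  calc -cubeE (fun x => lap f x * h x)
      = cubeE (fun x => ∑ j, (f x - f (flipCoord j x)) / 2 * h x) := by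
        simp only [← sum_mul, ← neg_lap_eq_sum_sub_flipCoord, cubeE, neg_mul, sum_neg_distrib,
          neg_div]
    _ = cubeE (fun x => ∑ j, cubeGrad j f x * cubeGrad j h x) := by
        simp only [cubeE_sum, cubeE_sub_flipCoord_mul]

theorem min_mul_neg_cubeE_lap_mul_signedRpow_le {p : ℝ} (hp : 1 ≤ p) (f : (Fin n → Bool) → ℝ) :
    min (2 / p) (2 - 2 / p) *
        -cubeE (fun x => lap (fun y => signedRpow (p / 2) (f y)) x * signedRpow (p / 2) (f x))
      ≤ -cubeE (fun x => lap f x * signedRpow (p - 1) (f x)) := by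
  rw [neg_cubeE_lap_mul_eq_cubeE_sum_cubeGrad _ fun x => signedRpow (p / 2) (f x),
    neg_cubeE_lap_mul_eq_cubeE_sum_cubeGrad f fun x => signedRpow (p - 1) (f x),
    cubeE_eq_integral, cubeE_eq_integral, ← integral_const_mul]
  refine integral_mono .of_finite .of_finite fun x => ?_
  simp only [mul_sum, cubeGrad]
  refine sum_le_sum fun j _ => ?_
  linarith [stroock_varopoulos hp (f (Function.update x j true)) (f (Function.update x j false))]

theorem cubeE_abs_rpow_le_variance_add_abs_cubeE_rpow {p : ℝ} (hp : 1 ≤ p)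
    (f : (Fin n → Bool) → ℝ) :
    1 / 16 * cubeE (fun x => |f x| ^ p)
      ≤ Var[fun x => signedRpow (p / 2) (f x); uniformOn Set.univ]
        + (2 : ℝ) ^ (p / 2) * |cubeE f| ^ p := by
  have hp₀ : p ≠ 0 := by positivity
  have hsq : ∀ x, signedRpow (p / 2) (f x) ^ 2 = |f x| ^ p := fun x => by
    rw [sq, signedRpow_mul_signedRpow (by rwa [add_halves]), add_halves]
  have exp_one : p / 2 * (2 / p) = 1 := by field_simp
  have hinv : ∀ x, signedRpow (2 / p) (signedRpow (p / 2) (f x)) = f x := fun x => by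
    rw [signedRpow_signedRpow, exp_one, signedRpow_one]
  simpa only [hsq, hinv, ← cubeE_eq_integral] using
    integral_sq_le_variance_add_abs_integral_signedRpow_rpow
      (μ := uniformOn Set.univ) (g := fun x => signedRpow (p / 2) (f x)) hp .of_discrete

end Cube

/-- There is an absolute constant `C₁ > 0` such that for every `1 < p < ∞`
(with conjugate exponent `p' = p/(p-1)` and `c_p = 2 min(1/p, 1/p')`), every `n`
and every `f : C_n → ℝ`:
`-E(Δf · |f|^{p-1} sgn f) ≥ C₁ c_p E|f|^p - 2^{p/2} c_p |E f|^p`. -/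
theorem stmt4 :
    ∃ C₁ : ℝ, 0 < C₁ ∧
      ∀ p : ℝ, 1 < p →
        ∀ (n : ℕ) (f : (Fin n → Bool) → ℝ),
          -cubeE (fun x => lap f x * (|f x| ^ (p - 1) * Real.sign (f x))) ≥
            C₁ * (2 * min (1 / p) (1 / (p / (p - 1)))) * cubeE (fun x => |f x| ^ p) -
              (2 : ℝ) ^ (p / 2) * (2 * min (1 / p) (1 / (p / (p - 1)))) * |cubeE f| ^ p := by
  refine ⟨1 / 16, by norm_num, fun p hp n f => ?_⟩
  rw [two_mul_min_one_div_eq (by positivity)]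
  have hc : 0 ≤ min (2 / p) (2 - 2 / p) :=
    le_min (by positivity) (sub_nonneg.mpr (div_le_self zero_le_two hp.le))
  have hmoment := cubeE_abs_rpow_le_variance_add_abs_cubeE_rpow hp.le f
  have hpoincare := variance_le_neg_cubeE_lap_mul_self fun x => signedRpow (p / 2) (f x)
  have hcompare := min_mul_neg_cubeE_lap_mul_signedRpow_le hp.le f
  change -cubeE (fun x => lap f x * signedRpow (p - 1) (f x)) ≥ _
  linarith [mul_le_mul_of_nonneg_left (hmoment.trans (add_le_add_left hpoincare _)) hc]
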